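/- For every hypergraph G, the hierarchy width of G equals the minimum width of a hierarchy decomposition of G. -/

import Mathlib

/-- Connectivity relation between hyperedges within the edge set `E` of a hypergraph whose
hyperedges have vertex sets given by `dep`. -/
def EdgeConn {α ι : Type*} (dep : ι → Finset α) (E : Finset ι) : ι → ι → Prop :=
  Relation.ReflTransGen fun a b => a ∈ E ∧ b ∈ E ∧ ∃ v, v ∈ dep a ∧ v ∈ dep b

open Classical in
/-- Hierarchy width of the hypergraph with hyperedges `E`, where hyperedge `e` consists of
the vertices `dep e`: `0` if there are no hyperedges; `1 +` the minimum over single-edge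
removals for a connected hypergraph; the maximum over connected components otherwise. -/
noncomputable def hw {α ι : Type*} [DecidableEq ι] (dep : ι → Finset α) (E : Finset ι) : ℕ :=
  E.sup fun e =>
    1 + ((E.filter fun f => EdgeConn dep E e f).attach.inf fun f =>
      ((hw dep ((E.filter fun f => EdgeConn dep E e f).erase f.1) : ℕ∞))).toNat
termination_by E.card
decreasing_by
  exact lt_of_lt_of_le (Finset.card_erase_lt_of_mem f.2)
    (Finset.card_le_card (Finset.filter_subset _ _))

/-- A hierarchy decomposition of the hypergraph with hyperedges `E` (hyperedge `e` has
vertex set `dep e`): a rooted tree whose nodes `v` are labeled with sets `χ v` of hyperedges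
such that (1) every hyperedge occurs in some label, (2) the nodes whose labels contain a
given hyperedge are connected along tree paths, (3) any two intersecting hyperedges occur
together in some label, and (4) the label of a parent is contained in the label of each of
its children (a node `u` is the parent of `v` if they are adjacent and `u` lies on the
unique path from `v` to the root). -/
structure HierDecomp {α ι : Type*} (dep : ι → Finset α) (E : Finset ι) where
  τ : Type
  fin : Fintype τ
  T : SimpleGraph τ
  tree : T.IsTree
  root : τ
  χ : τ → Finset ι
  sub : ∀ v, χ v ⊆ E
  cover : ∀ e ∈ E, ∃ v, e ∈ χ v
  pathconn : ∀ e : ι, ∀ u v : τ, e ∈ χ u → e ∈ χ v →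
    ∀ p : T.Walk u v, p.IsPath → ∀ w ∈ p.support, e ∈ χ w
  meet : ∀ e ∈ E, ∀ f ∈ E, (∃ a, a ∈ dep e ∧ a ∈ dep f) → ∃ v, e ∈ χ v ∧ f ∈ χ v
  parentMono : ∀ u v : τ, T.Adj u v →
    (∀ p : T.Walk v root, p.IsPath → u ∈ p.support) → χ u ⊆ χ v

/-- The width of a hierarchy decomposition: the size of its largest label. -/
noncomputable def HierDecomp.width {α ι : Type*} {dep : ι → Finset α} {E : Finset ι}
    (D : HierDecomp dep E) : ℕ :=
  letI := D.fin
  Finset.univ.sup fun v => (D.χ v).card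

/-!
Hierarchy width is a tree-depth: both `hw` and the width of hierarchy decompositions measure the
depth of a preorder on the hyperedges in which the elements below any given one are pairwise
comparable, and in which intersecting hyperedges are comparable.

* Such a preorder has a least element `f` in each connected component, and removing `f` lowers the
  depth there by one; conversely, unfolding the recursion of `hw` builds such a preorder by putting
  the removed hyperedge below the rest of its component.
* In a hierarchy decomposition, order the hyperedges by reverse inclusion of the sets of nodes
  carrying them. Labels shrink along the path from a node `v` to the root, and the paths from `v`
  and from any other node `x` to the root first meet on the path from `x` to `v`, which makes
  these sets laminar. Conversely, the Hasse diagram of the preorder (with a bottom element added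
  and equivalent hyperedges identified) is a tree, and its nodes can be labelled by lower sets.
-/

section Recursion

variable {α ι : Type*} {dep : ι → Finset α} {E : Finset ι} {e f : ι}

open Classical in
/-- The connected component of the hyperedge `e` in the hypergraph `E`, as a set of hyperedges;
it is empty if `e ∉ E`. -/
noncomputable def edgeComp (dep : ι → Finset α) (E : Finset ι) (e : ι) : Finset ι :=
  {f ∈ E | EdgeConn dep E e f}

theorem mem_edgeComp : f ∈ edgeComp dep E e ↔ f ∈ E ∧ EdgeConn dep E e f := by
  simp [edgeComp]

theorem mem_edgeComp_self (he : e ∈ E) : e ∈ edgeComp dep E e :=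
  mem_edgeComp.2 ⟨he, .refl⟩

theorem edgeComp_subset : edgeComp dep E e ⊆ E := fun _ hf => (mem_edgeComp.1 hf).1

theorem EdgeConn.symm (h : EdgeConn dep E e f) : EdgeConn dep E f e :=
  have : Std.Symm fun a b => a ∈ E ∧ b ∈ E ∧ ∃ v, v ∈ dep a ∧ v ∈ dep b :=
    ⟨fun _ _ ⟨ha, hb, v, hva, hvb⟩ => ⟨hb, ha, v, hvb, hva⟩⟩
  symm_of (Relation.ReflTransGen _) h

theorem EdgeConn.edgeComp_eq (h : EdgeConn dep E e f) : edgeComp dep E e = edgeComp dep E f := by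
  ext g
  simp only [mem_edgeComp]
  exact and_congr_right fun _ => ⟨h.symm.trans, h.trans⟩

theorem toNat_inf_natCast_lt_iff {β : Type*} {s : Finset β} (hs : s.Nonempty) (φ : β → ℕ) {k : ℕ} :
    (s.inf fun b => (φ b : ℕ∞)).toNat < k ↔ ∃ b ∈ s, φ b < k := by
  obtain ⟨b, -, hb⟩ := Finset.exists_mem_eq_inf s hs fun b => (φ b : ℕ∞)
  have hcast : ((s.inf fun b => (φ b : ℕ∞)).toNat : ℕ∞) = s.inf fun b => (φ b : ℕ∞) := by
    rw [hb, ENat.toNat_natCast]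
  rw [← Nat.cast_lt (α := ℕ∞), hcast, Finset.inf_lt_iff]
  simp only [Nat.cast_lt]

theorem hw_le_iff [DecidableEq ι] {k : ℕ} :
    hw dep E ≤ k ↔
      ∀ e ∈ E, ∃ f ∈ edgeComp dep E e, hw dep ((edgeComp dep E e).erase f) < k := by
  rw [hw, Finset.sup_le_iff]
  refine forall₂_congr fun e he => ?_
  have hne : (edgeComp dep E e).attach.Nonempty :=
    ⟨⟨e, mem_edgeComp_self he⟩, Finset.mem_attach _ _⟩
  have hinf := toNat_inf_natCast_lt_iff hne (k := k)
    fun f => hw dep ((edgeComp dep E e).erase f.1)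
  simp only [Finset.mem_attach, true_and, Subtype.exists, exists_prop] at hinf
  rw [← hinf, add_comm]
  exact Nat.succ_le_iff

end Recursion

section ElimPreorder

variable {α ι : Type*} {dep : ι → Finset α} {E : Finset ι} {k : ℕ} {r : ι → ι → Prop}

/-- `r` is an elimination preorder of depth at most `k` on the hypergraph `E`: the preorder analogue
of the elimination forests defining tree-depth, `r e f` meaning that `e` is an ancestor of `f`.
Being a preorder on all of `ι`, `r` may relate hyperedges outside `E`, but these do not count
towards the depth, which bounds the number of ancestors in `E` of a hyperedge of `E`. -/
structure IsElimPreorder (dep : ι → Finset α) (E : Finset ι) (k : ℕ) (r : ι → ι → Prop) :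
    Prop where
  refl : ∀ e, r e e
  trans : ∀ e f g, r e f → r f g → r e g
  total_below : ∀ g ∈ E, ∀ e f, r e g → r f g → r e f ∨ r f e
  meet : ∀ e ∈ E, ∀ f ∈ E, (∃ v, v ∈ dep e ∧ v ∈ dep f) → r e f ∨ r f e
  card_le : ∀ e ∈ E, ∀ A ⊆ E, (∀ a ∈ A, r a e) → A.card ≤ k

namespace IsElimPreorder

/-- The preorder on the hyperedges with `r` as its `≤`. -/
abbrev toPreorder (h : IsElimPreorder dep E k r) : Preorder ι where
  le := r
  le_refl := h.refl
  le_trans := h.trans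

theorem exists_least_edgeComp (h : IsElimPreorder dep E k r) {e : ι} (he : e ∈ E) :
    ∃ f ∈ edgeComp dep E e, ∀ g ∈ edgeComp dep E e, r f g := by
  let := h.toPreorder
  obtain ⟨f, hf, hmin⟩ := (edgeComp dep E e).exists_minimal ⟨e, mem_edgeComp_self he⟩
  have hef := (mem_edgeComp.1 hf).2
  refine ⟨f, hf, fun g hg => ?_⟩
  have hfg : EdgeConn dep E f g := hef.symm.trans (mem_edgeComp.1 hg).2
  clear hg
  induction hfg with
  | refl => exact h.refl f
  | @tail b c hfb hbc hrfb =>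
    obtain ⟨hb, hc, hmeet⟩ := hbc
    have hcmem : c ∈ edgeComp dep E e :=
      mem_edgeComp.2 ⟨hc, hef.trans (hfb.tail ⟨hb, hc, hmeet⟩)⟩
    rcases h.meet b hb c hc hmeet with hrbc | hrcb
    · exact h.trans f b c hrfb hrbc
    · exact (h.total_below b hb f c hrfb hrcb).elim id (hmin hcmem)

theorem erase_least [DecidableEq ι] {F : Finset ι} {f : ι} (h : IsElimPreorder dep E (k + 1) r)
    (hFE : F ⊆ E) (hf : f ∈ F) (hleast : ∀ g ∈ F, r f g) : IsElimPreorder dep (F.erase f) k r where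
  refl := h.refl
  trans := h.trans
  total_below g hg := h.total_below g (hFE (Finset.mem_of_mem_erase hg))
  meet e he g hg :=
    h.meet e (hFE (Finset.mem_of_mem_erase he)) g (hFE (Finset.mem_of_mem_erase hg))
  card_le e he A hA hAe := by
    have heF := Finset.mem_of_mem_erase he
    have hfA : f ∉ A := fun hfA => Finset.notMem_erase f F (hA hfA)
    have hsub : insert f A ⊆ E :=
      Finset.insert_subset (hFE hf) (hA.trans ((Finset.erase_subset f F).trans hFE))
    have hcard := h.card_le e (hFE heF) (insert f A) hsub
      (Finset.forall_mem_insert _ _ _ |>.2 ⟨hleast e heF, hAe⟩)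
    rw [Finset.card_insert_of_notMem hfA] at hcard
    exact Nat.le_of_succ_le_succ hcard

theorem hw_le [DecidableEq ι] (h : IsElimPreorder dep E k r) : hw dep E ≤ k := by
  induction E using Finset.strongInduction generalizing k with
  | H E ih =>
  refine hw_le_iff.2 fun e he => ?_
  obtain ⟨f, hf, hleast⟩ := h.exists_least_edgeComp he
  have hpos : 0 < k :=
    h.card_le e he {e} (Finset.singleton_subset_iff.2 he) (by simp [h.refl e])
  obtain ⟨k, rfl⟩ := Nat.exists_eq_add_one.2 hpos
  have hssub : (edgeComp dep E e).erase f ⊂ E :=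
    (Finset.erase_ssubset hf).trans_subset edgeComp_subset
  exact ⟨f, hf, Nat.lt_succ_of_le (ih _ hssub (h.erase_least edgeComp_subset hf hleast))⟩

theorem cons_least [DecidableEq ι] {f : ι} (h : IsElimPreorder dep (E.erase f) k r) :
    IsElimPreorder dep E (k + 1) fun a b => a = f ∨ b ≠ f ∧ r a b where
  refl e := (eq_or_ne e f).imp_right fun hef => ⟨hef, h.refl e⟩
  trans := by
    rintro a b c (haf | ⟨hbf, hab⟩) (hbf' | ⟨hcf, hbc⟩)
    exacts [.inl haf, .inl haf, absurd hbf' hbf, .inr ⟨hcf, h.trans a b c hab hbc⟩]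
  total_below := by
    rintro c hc a b (haf | ⟨hcf, hac⟩) (hbf | ⟨-, hbc⟩)
    · exact .inl (.inl haf)
    · exact .inl (.inl haf)
    · exact .inr (.inl hbf)
    · have := h.total_below c (Finset.mem_erase.2 ⟨hcf, hc⟩) a b hac hbc
      tauto
  meet a ha b hb hab := by
    by_cases haf : a = f
    · exact .inl (.inl haf)
    by_cases hbf : b = f
    · exact .inr (.inl hbf)
    exact (h.meet a (Finset.mem_erase.2 ⟨haf, ha⟩) b (Finset.mem_erase.2 ⟨hbf, hb⟩) hab).imp
      (.inr ⟨hbf, ·⟩) (.inr ⟨haf, ·⟩)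
  card_le e he A hA hAe := by
    have hAf : ∀ a ∈ A.erase f, e ≠ f ∧ r a e := fun a ha =>
      (hAe a (Finset.mem_of_mem_erase ha)).resolve_left (Finset.ne_of_mem_erase ha)
    have hcard : (A.erase f).card ≤ k := by
      by_cases hef : e = f
      · simp [Finset.eq_empty_of_forall_notMem fun a ha => (hAf a ha).1 hef]
      · exact h.card_le e (Finset.mem_erase.2 ⟨hef, he⟩) _ (Finset.erase_subset_erase f hA)
          fun a ha => (hAf a ha).2
    exact (Nat.le_add_of_sub_le Finset.pred_card_le_card_erase).trans (Nat.succ_le_succ hcard)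

theorem of_edgeComp {R : Finset ι → ι → ι → Prop}
    (hR : ∀ e, IsElimPreorder dep (edgeComp dep E e) k (R (edgeComp dep E e))) :
    IsElimPreorder dep E k fun e f => EdgeConn dep E e f ∧ R (edgeComp dep E e) e f where
  refl e := ⟨.refl, (hR e).refl e⟩
  trans := by
    rintro e f g ⟨hef, ref⟩ ⟨hfg, rfg⟩
    rw [← hef.edgeComp_eq] at rfg
    exact ⟨hef.trans hfg, (hR e).trans e f g ref rfg⟩
  total_below := by
    rintro g hg e f ⟨heg, reg⟩ ⟨hfg, rfg⟩
    rw [heg.edgeComp_eq, hfg.edgeComp_eq] at *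
    exact ((hR g).total_below g (mem_edgeComp_self hg) e f reg rfg).imp
      (⟨heg.trans hfg.symm, ·⟩) (⟨hfg.trans heg.symm, ·⟩)
  meet e he f hf hef := by
    have hconn : EdgeConn dep E e f := .single ⟨he, hf, hef⟩
    rw [← hconn.edgeComp_eq]
    exact ((hR e).meet e (mem_edgeComp_self he) f (mem_edgeComp.2 ⟨hf, hconn⟩) hef).imp
      (⟨hconn, ·⟩) (⟨hconn.symm, ·⟩)
  card_le e he A hA hAe := (hR e).card_le e (mem_edgeComp_self he) A
    (fun a ha => mem_edgeComp.2 ⟨hA ha, (hAe a ha).1.symm⟩)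
    fun a ha => (hAe a ha).1.edgeComp_eq ▸ (hAe a ha).2

end IsElimPreorder

theorem exists_isElimPreorder_of_hw_le [DecidableEq ι] (h : hw dep E ≤ k) :
    ∃ r, IsElimPreorder dep E k r := by
  induction E using Finset.strongInduction generalizing k with
  | H E ih =>
  have hcomp : ∀ C ∈ Set.range (edgeComp dep E), ∃ r, IsElimPreorder dep C k r := by
    rintro _ ⟨e, rfl⟩
    obtain hempty | ⟨g, hg⟩ := (edgeComp dep E e).eq_empty_or_nonempty
    · exact ⟨Eq, fun _ => rfl, fun _ _ _ => Eq.trans, by simp [hempty], by simp [hempty],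
        by simp [hempty]⟩
    obtain ⟨hgE, hconn⟩ := mem_edgeComp.1 hg
    obtain ⟨f, hf, hlt⟩ := hw_le_iff.1 h g hgE
    obtain ⟨k, rfl⟩ := Nat.exists_eq_add_one.2 (Nat.zero_lt_of_lt hlt)
    obtain ⟨r, hr⟩ := ih _ ((Finset.erase_ssubset hf).trans_subset edgeComp_subset)
      (Nat.le_of_lt_succ hlt)
    exact ⟨_, hconn.edgeComp_eq ▸ hr.cons_least⟩
  -- Choosing per component, not per hyperedge, makes the preorders agree within a component.
  choose! R hR using hcomp
  exact ⟨_, .of_edgeComp (Set.forall_mem_range.1 hR)⟩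

end ElimPreorder

section Trees

open SimpleGraph

variable {V : Type*}

theorem support_subset_of_isPath {G : SimpleGraph V} (hG : G.IsAcyclic) {u v : V} {p : G.Walk u v}
    (hp : p.IsPath) (q : G.Walk u v) : p.support ⊆ q.support := by
  classical
  have hpq : p = q.bypass :=
    congrArg Subtype.val ((hG.subsingleton_path u v).elim ⟨p, hp⟩ ⟨_, q.bypass_isPath⟩)
  exact hpq ▸ q.support_bypass_subset_support

theorem exists_isPath_mem_support_inter {G : SimpleGraph V} {u v w : V} (p : G.Walk u w)
    (hp : p.IsPath) (q : G.Walk v w) :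
    ∃ s : G.Walk u v, s.IsPath ∧ s.support ⊆ p.support ++ q.support ∧
      ∃ m ∈ s.support, m ∈ p.support ∧ m ∈ q.support := by
  classical
  induction p with
  | @nil u =>
    refine ⟨q.reverse.bypass, Walk.bypass_isPath _, fun x hx => ?_,
      u, Walk.start_mem_support _, Walk.start_mem_support _, q.end_mem_support⟩
    have hxq := Walk.support_bypass_subset_support _ hx
    rw [Walk.support_reverse, List.mem_reverse] at hxq
    exact List.mem_append_right _ hxq
  | @cons u x w hux p ih =>
    rw [Walk.cons_isPath_iff] at hp
    obtain ⟨s, hs, hsub, m, hms, hmp, hmq⟩ := ih hp.1 q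
    rw [Walk.support_cons, List.cons_append]
    by_cases hus : u ∈ s.support
    · have huq : u ∈ q.support := (List.mem_append.1 (hsub hus)).resolve_left hp.2
      exact ⟨s.dropUntil u hus, hs.dropUntil hus,
        fun y hy => List.mem_cons_of_mem u (hsub (s.support_dropUntil_subset_support hus hy)),
        u, Walk.start_mem_support _, List.mem_cons_self, huq⟩
    · exact ⟨.cons hux s, hs.cons hus, List.cons_subset_cons u hsub,
        m, List.mem_cons_of_mem u hms, List.mem_cons_of_mem u hmp, hmq⟩

theorem exists_walk_hasse_of_le [PartialOrder V] [WellFoundedLT V] [IsStronglyCoatomic V]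
    {x y : V} (hyx : y ≤ x) : ∃ p : (hasse V).Walk x y, ∀ z ∈ p.support, z ∈ Set.Icc y x := by
  induction x using WellFoundedLT.induction with
  | ind x ih =>
  obtain rfl | hlt := hyx.eq_or_lt
  · exact ⟨.nil, by simp⟩
  obtain ⟨x', hyx', hcov⟩ := exists_le_covBy_of_lt hlt
  obtain ⟨p, hp⟩ := ih x' hcov.lt hyx'
  refine ⟨.cons (hasse_adj.2 (.inr hcov)) p, ?_⟩
  rw [Walk.support_cons, List.forall_mem_cons]
  exact ⟨⟨hyx, le_rfl⟩, fun z hz => ⟨(hp z hz).1, (hp z hz).2.trans hcov.le⟩⟩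

theorem eq_of_covBy_of_isChain_Iic [PartialOrder V] {x y z : V}
    (hz : IsChain (· ≤ ·) (Set.Iic z)) (hx : x ⋖ z) (hy : y ⋖ z) : x = y :=
  (hz.total hx.le hy.le).elim (fun h => h.eq_or_lt.elim id fun hlt => absurd hy.lt (hx.2 hlt))
    fun h => h.eq_or_lt.elim Eq.symm fun hlt => absurd hx.lt (hy.2 hlt)

theorem isTree_hasse [PartialOrder V] [OrderBot V] [Finite V]
    (hV : ∀ z : V, IsChain (· ≤ ·) (Set.Iic z)) : (hasse V).IsTree := by
  have hconn : (hasse V).Connected := by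
    refine ⟨fun x y => ?_⟩
    obtain ⟨p, -⟩ := exists_walk_hasse_of_le (bot_le (a := x))
    obtain ⟨q, -⟩ := exists_walk_hasse_of_le (bot_le (a := y))
    exact ⟨p.append q.reverse⟩
  refine isTree_iff_connected_and_card.2
    ⟨hconn, le_antisymm ?_ hconn.card_vert_le_card_edgeSet_add_one⟩
  -- Every edge is determined by its upper end.
  choose! par hpar using fun (x : V) (hx : x ≠ ⊥) => exists_le_covBy_of_lt (bot_lt_iff_ne_bot.2 hx)
  have hedge : ∀ x y : V, x ⋖ y → s(par y, y) = s(x, y) := fun x y hxy => by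
    rw [eq_of_covBy_of_isChain_Iic (hV y) (hpar y hxy.lt.ne_bot).2 hxy]
  have hsub : (hasse V).edgeSet ⊆ (fun y => s(par y, y)) '' {⊥}ᶜ := by
    rintro ⟨x, y⟩ (hxy | hyx)
    · exact ⟨y, hxy.lt.ne_bot, hedge x y hxy⟩
    · exact ⟨x, hyx.lt.ne_bot, (hedge y x hyx).trans Sym2.eq_swap⟩
  calc Nat.card (hasse V).edgeSet + 1
      ≤ ({⊥}ᶜ : Set V).ncard + 1 := by
        rw [Nat.card_coe_set_eq]
        exact Nat.succ_le_succ ((Set.ncard_le_ncard hsub).trans (Set.ncard_image_le))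
    _ = Nat.card V := by
        rw [← Set.ncard_add_ncard_compl {⊥}, Set.ncard_singleton, add_comm]

theorem isChain_Iic_withBot_antisymmetrization [Preorder V]
    (hV : ∀ z : V, IsChain (· ≤ ·) (Set.Iic z))
    (z : WithBot (Antisymmetrization V (· ≤ ·))) : IsChain (· ≤ ·) (Set.Iic z) := by
  intro x hx y hy _
  induction x with
  | bot => exact .inl bot_le
  | coe x =>
  induction y with
  | bot => exact .inr bot_le
  | coe y =>
  induction z with
  | bot => exact absurd hx (WithBot.not_coe_le_bot _)
  | coe z =>
  simp only [Set.mem_Iic, WithBot.coe_le_coe] at hx hy ⊢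
  induction x using Quotient.inductionOn
  induction y using Quotient.inductionOn
  induction z using Quotient.inductionOn
  exact (hV _).total hx hy

theorem exists_treeOrder_of_isChain_Iic {P : Type*} [Preorder P] [Finite P]
    (hP : ∀ z : P, IsChain (· ≤ ·) (Set.Iic z)) :
    ∃ (V : Type) (_ : PartialOrder V) (_ : OrderBot V) (t : P → V), Finite V ∧
      (∀ z : V, IsChain (· ≤ ·) (Set.Iic z)) ∧ (∀ x y, t x ≤ t y ↔ x ≤ y) ∧
      Set.range t = {⊥}ᶜ := by
  have : Finite (WithBot (Antisymmetrization P (· ≤ ·))) :=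
    inferInstanceAs (Finite (Option (Quotient _)))
  let cls : P → WithBot (Antisymmetrization P (· ≤ ·)) :=
    WithBot.some ∘ toAntisymmetrization (· ≤ ·)
  let φ := orderIsoShrink.{0} (WithBot (Antisymmetrization P (· ≤ ·)))
  refine ⟨_, inferInstance, inferInstance, φ ∘ cls, .of_injective φ.symm φ.symm.injective,
    fun z x hx y hy _ => ?_, fun x y => ?_, ?_⟩
  · exact ((isChain_Iic_withBot_antisymmetrization hP (φ.symm z)).total
      (φ.symm.monotone hx) (φ.symm.monotone hy)).imp φ.symm.le_iff_le.1 φ.symm.le_iff_le.1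
  · exact φ.le_iff_le.trans WithBot.coe_le_coe
  · have hcls : Set.range cls = {⊥}ᶜ := by
      rw [← Set.Ioi_bot, ← WithBot.range_coe]
      exact Quotient.mk_surjective.range_comp WithBot.some
    rw [Set.range_comp, hcls, Set.image_compl_eq φ.bijective, Set.image_singleton, φ.map_bot]

end Trees

namespace HierDecomp

variable {α ι : Type*} {dep : ι → Finset α} {E : Finset ι} {k : ℕ}

theorem width_le_iff {D : HierDecomp dep E} : D.width ≤ k ↔ ∀ v, (D.χ v).card ≤ k := by
  simp [width, Finset.sup_le_iff]

theorem pairwise_label_support (D : HierDecomp dep E) {v : D.τ} (p : D.T.Walk v D.root)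
    (hp : p.IsPath) : p.support.Pairwise fun u w => D.χ w ⊆ D.χ u := by
  have : IsTrans D.τ fun u w => D.χ w ⊆ D.χ u := ⟨fun _ _ _ huw hwx => hwx.trans huw⟩
  rw [← List.isChain_iff_pairwise]
  generalize hr : D.root = r at p
  induction p with
  | nil => exact .singleton _
  | @cons v u r hvu p ih =>
    subst hr
    have hu : D.χ u ⊆ D.χ v := D.parentMono u v hvu.symm fun q _ =>
      support_subset_of_isPath D.tree.isAcyclic hp q
        (List.mem_cons_of_mem v p.start_mem_support)
    rw [SimpleGraph.Walk.support_cons, ← p.cons_tail_support, List.isChain_cons_cons,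
      p.cons_tail_support]
    exact ⟨hu, ih rfl hp.of_cons⟩

theorem label_subset_of_mem_support (D : HierDecomp dep E) {u v : D.τ} {p : D.T.Walk v D.root}
    (hp : p.IsPath) (hu : u ∈ p.support) : D.χ u ⊆ D.χ v := by
  have hpair := D.pairwise_label_support p hp
  rw [← p.cons_tail_support] at hpair hu
  obtain rfl | hu := List.mem_cons.1 hu
  · exact subset_rfl
  · exact List.rel_of_pairwise_cons hpair hu

theorem mem_label_of_forall_mem_support (D : HierDecomp dep E) {e f : ι} {v w : D.τ}
    (q : D.T.Walk v D.root) (hq : ∀ u ∈ q.support, e ∈ D.χ u → f ∈ D.χ u)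
    (hev : e ∈ D.χ v) (hew : e ∈ D.χ w) : f ∈ D.χ w := by
  obtain ⟨p, hp, -⟩ := D.tree.existsUnique_path w D.root
  obtain ⟨s, hs, -, m, hms, hmp, hmq⟩ := exists_isPath_mem_support_inter p hp q
  have hem : e ∈ D.χ m := D.pathconn e w v hew hev s hs m hms
  exact D.label_subset_of_mem_support hp hmp (hq m hmq hem)

theorem laminar (D : HierDecomp dep E) {e f : ι} {v : D.τ} (he : e ∈ D.χ v) (hf : f ∈ D.χ v) :
    (∀ w, e ∈ D.χ w → f ∈ D.χ w) ∨ ∀ w, f ∈ D.χ w → e ∈ D.χ w := by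
  obtain ⟨p, hp, -⟩ := D.tree.existsUnique_path v D.root
  have hpair := D.pairwise_label_support p hp
  have hchain : ∀ u ∈ p.support, ∀ w ∈ p.support, D.χ u ⊆ D.χ w ∨ D.χ w ⊆ D.χ u :=
    fun u hu w hw => List.Pairwise.forall_of_forall_of_flip
      (R := fun u w => D.χ u ⊆ D.χ w ∨ D.χ w ⊆ D.χ u) (fun _ _ => .inl subset_rfl)
      (hpair.imp Or.inr) (hpair.imp Or.inl) hu hw
  by_cases hef : ∀ u ∈ p.support, e ∈ D.χ u → f ∈ D.χ u
  · exact .inl fun w => D.mem_label_of_forall_mem_support p hef he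
  · push Not at hef
    obtain ⟨u, hu, heu, hfu⟩ := hef
    exact .inr fun w => D.mem_label_of_forall_mem_support p (fun w hw hfw =>
      (hchain u hu w hw).elim (· heu) fun hwu => absurd (hwu hfw) hfu) hf

theorem isElimPreorder (D : HierDecomp dep E) :
    IsElimPreorder dep E D.width fun e f => ∀ v, f ∈ D.χ v → e ∈ D.χ v where
  refl _ _ := id
  trans _ _ _ hef hfg v hg := hef v (hfg v hg)
  total_below g hg e f heg hfg := by
    obtain ⟨v, hv⟩ := D.cover g hg
    exact (D.laminar (heg v hv) (hfg v hv)).symm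
  meet e he f hf hef := by
    obtain ⟨v, hev, hfv⟩ := D.meet e he f hf hef
    exact (D.laminar hev hfv).symm
  card_le e he A _ hAe := by
    obtain ⟨v, hv⟩ := D.cover e he
    exact (Finset.card_le_card fun a ha => hAe a ha v hv).trans (width_le_iff.1 le_rfl v)

open Classical SimpleGraph in
/-- The hierarchy decomposition on the Hasse diagram of a tree order `V` in which the hyperedge `e`
is introduced at the node `t e`. -/
noncomputable def ofTreeOrder {V : Type} [PartialOrder V] [OrderBot V] [Finite V]
    (hV : ∀ z : V, IsChain (· ≤ ·) (Set.Iic z)) (t : E → V)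
    (ht : ∀ e f : E, (∃ a, a ∈ dep e ∧ a ∈ dep f) → t e ≤ t f ∨ t f ≤ t e) :
    HierDecomp dep E where
  τ := V
  fin := Fintype.ofFinite V
  T := hasse V
  tree := isTree_hasse hV
  root := ⊥
  χ v := {e ∈ E | ∃ he : e ∈ E, t ⟨e, he⟩ ≤ v}
  sub _ := Finset.filter_subset _ _
  cover e he := ⟨t ⟨e, he⟩, Finset.mem_filter.2 ⟨he, he, le_rfl⟩⟩
  pathconn e u v hu hv p hp w hw := by
    obtain ⟨-, he, heu⟩ := Finset.mem_filter.1 hu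
    obtain ⟨-, _, hev⟩ := Finset.mem_filter.1 hv
    obtain ⟨q, hq⟩ := exists_walk_hasse_of_le heu
    obtain ⟨q', hq'⟩ := exists_walk_hasse_of_le hev
    have hwq := support_subset_of_isPath (isTree_hasse hV).isAcyclic hp (q.append q'.reverse) hw
    rw [Walk.mem_support_append_iff, Walk.support_reverse, List.mem_reverse] at hwq
    exact Finset.mem_filter.2 ⟨he, he, hwq.elim (fun h => (hq w h).1) fun h => (hq' w h).1⟩
  meet e he f hf hef := (ht ⟨e, he⟩ ⟨f, hf⟩ hef).elim
    (fun hle => ⟨t ⟨f, hf⟩, by simp [he, hf, hle]⟩) fun hle => ⟨t ⟨e, he⟩, by simp [he, hf, hle]⟩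
  parentMono u v _ hu := by
    obtain ⟨p, hp⟩ := exists_walk_hasse_of_le (bot_le (a := v))
    have huv : u ≤ v := (hp u (p.support_bypass_subset_support (hu _ p.bypass_isPath))).2
    exact Finset.monotone_filter_right E fun _ _ ⟨he, heu⟩ => ⟨he, heu.trans huv⟩

theorem mem_χ_ofTreeOrder {V : Type} [PartialOrder V] [OrderBot V] [Finite V]
    {hV : ∀ z : V, IsChain (· ≤ ·) (Set.Iic z)} {t : E → V}
    {ht : ∀ e f : E, (∃ a, a ∈ dep e ∧ a ∈ dep f) → t e ≤ t f ∨ t f ≤ t e} {v : V} {e : ι} :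
    e ∈ (ofTreeOrder hV t ht).χ v ↔ ∃ he : e ∈ E, t ⟨e, he⟩ ≤ v := by
  simp +contextual [ofTreeOrder]

end HierDecomp

theorem IsElimPreorder.exists_hierDecomp {α ι : Type*} {dep : ι → Finset α} {E : Finset ι} {k : ℕ}
    {r : ι → ι → Prop} (h : IsElimPreorder dep E k r) : ∃ D : HierDecomp dep E, D.width ≤ k := by
  let := h.toPreorder
  have hE : ∀ g : E, IsChain (· ≤ ·) (Set.Iic g) :=
    fun g e he f hf _ => h.total_below g g.2 e f he hf
  obtain ⟨V, _, _, t, _, hV, ht, hrange⟩ := exists_treeOrder_of_isChain_Iic hE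
  have hmeet : ∀ e f : E, (∃ a, a ∈ dep e ∧ a ∈ dep f) → t e ≤ t f ∨ t f ≤ t e := fun e f hef =>
    (h.meet e e.2 f f.2 hef).imp (ht e f).2 (ht f e).2
  refine ⟨.ofTreeOrder hV t hmeet, HierDecomp.width_le_iff.2 fun v => ?_⟩
  obtain hempty | ⟨e, he⟩ := ((HierDecomp.ofTreeOrder hV t hmeet).χ v).eq_empty_or_nonempty
  · simp [hempty]
  obtain ⟨heE, hev⟩ := HierDecomp.mem_χ_ofTreeOrder.1 he
  have hne : ∀ e, t e ≠ ⊥ := fun e => hrange.subset ⟨e, rfl⟩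
  obtain ⟨g, rfl⟩ := hrange.superset (ne_bot_of_le_ne_bot (hne _) hev)
  refine h.card_le g g.2 _ (HierDecomp.sub _ _) fun a ha => ?_
  obtain ⟨haE, hag⟩ := HierDecomp.mem_χ_ofTreeOrder.1 ha
  exact (ht ⟨a, haE⟩ g).1 hag

/-- The hierarchy width of a hypergraph equals the minimum width of a hierarchy
decomposition of it (in particular, a decomposition of minimum width exists). -/
theorem stmt15 {α ι : Type*} [DecidableEq ι] (dep : ι → Finset α) (E : Finset ι) :
    IsLeast {k : ℕ | ∃ D : HierDecomp dep E, D.width = k} (hw dep E) := by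
  have hw_le_width : ∀ D : HierDecomp dep E, hw dep E ≤ D.width := fun D => D.isElimPreorder.hw_le
  obtain ⟨r, hr⟩ := exists_isElimPreorder_of_hw_le (dep := dep) (E := E) le_rfl
  obtain ⟨D, hD⟩ := hr.exists_hierDecomp
  exact ⟨⟨D, hD.antisymm (hw_le_width D)⟩, fun _ ⟨D', hD'⟩ => hD' ▸ hw_le_width D'⟩
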